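/- arXiv:1708.08599 — 2 statements merged into one kernel-verified Lean document; each statement's English description precedes it below -/
import Mathlib

section
/- Let (a_n)_{n≥1} be a strictly increasing sequence of positive integers such that E(A_N) = Ω(N³), i.e. there exists c > 0 with E(A_N) > cN³ for infinitely many N. Then the set NPPC((a_n)_n) has full Lebesgue measure in [0,1]. -/
open Filter MeasureTheory
open scoped Classical

/-- Distance from a real number to the nearest integer. -/
noncomputable def dni (x : ℝ) : ℝ := |x - round x|

/-- Additive energy of a finite set of naturals:
`#{(a,b,c,d) ∈ I⁴ : a + b = c + d}`. -/
def addEnergy (A : Finset ℕ) : ℕ :=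
  (((A ×ˢ A) ×ˢ (A ×ˢ A)).filter fun q => q.1.1 + q.1.2 = q.2.1 + q.2.2).card

/-- The truncation `A_N = {a_n : 1 ≤ n ≤ N}`. -/
def trunc (a : ℕ → ℕ) (N : ℕ) : Finset ℕ := (Finset.Icc 1 N).image a

/-- Pair correlation function `R([-s,s], α, N)`. -/
noncomputable def pcf (a : ℕ → ℕ) (s α : ℝ) (N : ℕ) : ℝ :=
  (((Finset.Icc 1 N ×ˢ Finset.Icc 1 N).filter fun p =>
      p.1 ≠ p.2 ∧ dni (α * (a p.1 : ℝ) - α * (a p.2 : ℝ)) ≤ s / N).card : ℝ) / N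

/-- `(α a_n)_n` has Poissonian pair correlations. -/
def hasPPC (a : ℕ → ℕ) (α : ℝ) : Prop :=
  ∀ s : ℝ, 0 ≤ s → Tendsto (fun N => pcf a s α N) atTop (nhds (2 * s))

/-- The exceptional set `NPPC((a_n)_n)` of `α ∈ (0,1)` without PPC. -/
def NPPC (a : ℕ → ℕ) : Set ℝ := {α | α ∈ Set.Ioo (0 : ℝ) 1 ∧ ¬ hasPPC a α}

/-- Refining an equivalence relation on a finite set by a colouring with `M` colours divides the
number of related pairs by at most `M`. -/
theorem card_rel_le_mul_card_rel_color {ι κ : Type*} [DecidableEq κ] (T : Finset ι) (f : ι → κ)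
    (col : ι → ℕ) (M : ℕ) (hcol : ∀ x ∈ T, col x < M) :
    ((T ×ˢ T).filter fun p => f p.1 = f p.2).card ≤
      M * ((T ×ˢ T).filter fun p => f p.1 = f p.2 ∧ col p.1 = col p.2).card := by
  have hfib : ((T ×ˢ T).filter fun p => f p.1 = f p.2).card =
      ∑ k ∈ T.image f, (T.filter fun x => f x = k).card ^ 2 := by
    rw [Finset.card_eq_sum_card_fiberwise (f := fun p => f p.1) (t := T.image f)]
    · refine Finset.sum_congr rfl fun k _ => ?_
      rw [sq, ← Finset.card_product]
      congr 1
      ext p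
      simp only [Finset.mem_filter, Finset.mem_product]
      grind
    · intro p hp
      simp only [Finset.coe_filter, Finset.mem_product, Set.mem_ofPred_eq] at hp
      exact Finset.mem_coe.2 (Finset.mem_image_of_mem f hp.1.1)
  have hfib_col : ((T ×ˢ T).filter fun p => f p.1 = f p.2 ∧ col p.1 = col p.2).card =
      ∑ k ∈ T.image f, ∑ b ∈ Finset.range M,
        (T.filter fun x => f x = k ∧ col x = b).card ^ 2 := by
    rw [← Finset.sum_product', Finset.card_eq_sum_card_fiberwise
      (f := fun p => (f p.1, col p.1)) (t := T.image f ×ˢ Finset.range M)]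
    · refine Finset.sum_congr rfl fun k _ => ?_
      rw [sq, ← Finset.card_product]
      congr 1
      ext p
      simp only [Finset.mem_filter, Finset.mem_product, Prod.ext_iff]
      grind
    · intro p hp
      simp only [Finset.coe_filter, Finset.mem_product, Set.mem_ofPred_eq] at hp
      exact Finset.mem_coe.2 (Finset.mem_product.2 ⟨Finset.mem_image_of_mem f hp.1.1,
        Finset.mem_range.2 (hcol _ hp.1.1)⟩)
  rw [hfib, hfib_col, Finset.mul_sum]
  refine Finset.sum_le_sum fun k _ => ?_
  have hsplit : (T.filter fun x => f x = k).card =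
      ∑ b ∈ Finset.range M, (T.filter fun x => f x = k ∧ col x = b).card := by
    rw [Finset.card_eq_sum_card_fiberwise (f := col) (t := Finset.range M)]
    · refine Finset.sum_congr rfl fun b _ => ?_
      rw [Finset.filter_filter]
    · intro x hx
      simp only [Finset.coe_filter, Set.mem_ofPred_eq] at hx
      exact Finset.mem_coe.2 (Finset.mem_range.2 (hcol _ hx.1))
  rw [hsplit]
  simpa using sq_sum_le_card_mul_sum_sq (s := Finset.range M)
    (f := fun b => (T.filter fun x => f x = k ∧ col x = b).card)

/-- The pairs of indices in `J` whose terms differ by `v`. -/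
def diffPairs (a : ℕ → ℕ) (J : Finset ℕ) (v : ℤ) : Finset (ℕ × ℕ) :=
  (J ×ˢ J).filter fun p => (a p.1 : ℤ) - a p.2 = v

/-- The index pairs counted by the pair correlation function. -/
noncomputable def closePairs (a : ℕ → ℕ) (s α : ℝ) (N : ℕ) : Finset (ℕ × ℕ) :=
  (Finset.Icc 1 N ×ˢ Finset.Icc 1 N).filter fun p =>
    p.1 ≠ p.2 ∧ dni (α * (a p.1 : ℝ) - α * (a p.2 : ℝ)) ≤ s / N

theorem pcf_eq_card_closePairs (a : ℕ → ℕ) (s α : ℝ) (N : ℕ) :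
    pcf a s α N = ((closePairs a s α N).card : ℝ) / N := rfl

theorem addEnergy_image_le (a : ℕ → ℕ) (J : Finset ℕ) :
    addEnergy (J.image a) ≤ (((J ×ˢ J) ×ˢ (J ×ˢ J)).filter fun q =>
      (a q.1.1 : ℤ) - a q.1.2 = (a q.2.1 : ℤ) - a q.2.2).card := by
  refine Finset.card_le_card_of_surjOn
    (fun q => ((a q.1.1, a q.2.2), (a q.1.2, a q.2.1))) ?_
  rintro ⟨⟨x, y⟩, ⟨z, w⟩⟩ hq
  simp only [Finset.coe_filter, Finset.mem_product, Finset.mem_image, Set.mem_ofPred_eq] at hq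
  obtain ⟨⟨⟨⟨i, hi, rfl⟩, ⟨l, hl, rfl⟩⟩, ⟨j, hj, rfl⟩, ⟨k, hk, rfl⟩⟩, h⟩ := hq
  refine ⟨((i, j), (k, l)), ?_, rfl⟩
  simp only [Finset.coe_filter, Finset.mem_product, Set.mem_ofPred_eq]
  exact ⟨⟨⟨hi, hj⟩, hk, hl⟩, by omega⟩

theorem dni_sub_le_of_floor_eq {M : ℕ} (hM : 0 < M) {x y : ℝ}
    (h : ⌊(M : ℝ) * Int.fract x⌋₊ = ⌊(M : ℝ) * Int.fract y⌋₊) : dni (x - y) ≤ 1 / M := by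
  have hM' : (0 : ℝ) < M := by exact_mod_cast hM
  have hx := Nat.floor_le (mul_nonneg hM'.le (Int.fract_nonneg x))
  have hx' := Nat.lt_floor_add_one ((M : ℝ) * Int.fract x)
  have hy := Nat.floor_le (mul_nonneg hM'.le (Int.fract_nonneg y))
  have hy' := Nat.lt_floor_add_one ((M : ℝ) * Int.fract y)
  rw [h] at hx hx'
  have hround : dni (x - y) ≤ |x - y - ((⌊x⌋ - ⌊y⌋ : ℤ) : ℝ)| := round_le _ _
  refine hround.trans ?_
  have hfract : x - y - ((⌊x⌋ - ⌊y⌋ : ℤ) : ℝ) = Int.fract x - Int.fract y := by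
    simp only [Int.fract]; push_cast; ring
  rw [hfract, abs_le, ← neg_div, div_le_iff₀' hM', le_div_iff₀' hM']
  constructor <;> linarith

theorem floor_mul_fract_lt {M : ℕ} (hM : 0 < M) (x : ℝ) : ⌊(M : ℝ) * Int.fract x⌋₊ < M := by
  have hM' : (0 : ℝ) < M := by exact_mod_cast hM
  rw [Nat.floor_lt (mul_nonneg hM'.le (Int.fract_nonneg x))]
  nlinarith [Int.fract_lt_one x]

/-- The additive energy is controlled by the number of close pairs and the largest multiplicity
of a difference realised by a close pair. -/
theorem addEnergy_trunc_le (a : ℕ → ℕ) (N M : ℕ) (hinj : Set.InjOn a (Finset.Icc 1 N))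
    (hM : 0 < M) (s α m : ℝ) (hMs : 1 / (M : ℝ) ≤ s / N)
    (hm : ∀ p ∈ closePairs a s α N,
      ((diffPairs a (Finset.Icc 1 N) ((a p.1 : ℤ) - a p.2)).card : ℝ) ≤ m) :
    (addEnergy (trunc a N) : ℝ) ≤ M * ((N : ℝ) ^ 2 + (closePairs a s α N).card * m) := by
  set J := Finset.Icc 1 N with hJ
  set Q := ((J ×ˢ J) ×ˢ (J ×ˢ J)).filter fun q =>
    (a q.1.1 : ℤ) - a q.1.2 = (a q.2.1 : ℤ) - a q.2.2 ∧
    ⌊(M : ℝ) * Int.fract (α * a q.1.1)⌋₊ = ⌊(M : ℝ) * Int.fract (α * a q.2.1)⌋₊ with hQ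
  have henergy : addEnergy (trunc a N) ≤ M * Q.card :=
    (addEnergy_image_le a J).trans (card_rel_le_mul_card_rel_color (J ×ˢ J)
      (fun p => (a p.1 : ℤ) - a p.2) (fun p => ⌊(M : ℝ) * Int.fract (α * a p.1)⌋₊) M
      fun p _ => floor_mul_fract_lt hM _)
  have hdiag : (Q.filter fun q => q.1.1 = q.2.1).card ≤ N ^ 2 := by
    have hcard : (J ×ˢ J).card = N ^ 2 := by simp [hJ, sq]
    rw [← hcard]
    refine Finset.card_le_card_of_injOn (fun q => q.1) ?_ ?_
    · intro q hq
      simp only [hQ, Finset.coe_filter, Finset.mem_filter, Finset.mem_product,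
        Set.mem_ofPred_eq] at hq
      exact Finset.mem_coe.2 (Finset.mem_product.2 hq.1.1.1)
    · rintro ⟨⟨i, j⟩, ⟨k, l⟩⟩ hq ⟨⟨i', j'⟩, ⟨k', l'⟩⟩ hq' h
      simp only [hQ, Finset.coe_filter, Finset.mem_filter, Finset.mem_product,
        Set.mem_ofPred_eq, Prod.mk.injEq] at hq hq' h
      obtain ⟨rfl, rfl⟩ := h
      obtain ⟨⟨⟨⟨_, hj⟩, _, hl⟩, he, _⟩, rfl⟩ := hq
      obtain ⟨⟨⟨_, _, hl'⟩, he', _⟩, rfl⟩ := hq'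
      have : l = l' := hinj hl hl' (by omega)
      rw [this]
  have hoff : ((Q.filter fun q => ¬ q.1.1 = q.2.1).card : ℝ) ≤
      (closePairs a s α N).card * m := by
    rw [Finset.card_eq_sum_card_fiberwise (f := fun q => (q.1.1, q.2.1))
      (t := closePairs a s α N)]
    · push_cast
      rw [← nsmul_eq_mul]
      refine Finset.sum_le_card_nsmul _ _ _ fun p hp => le_trans ?_ (hm p hp)
      refine Nat.cast_le.2 ?_
      refine Finset.card_le_card_of_injOn (fun q => (q.1.2, q.2.2)) ?_ ?_
      · rintro ⟨⟨i, j⟩, ⟨k, l⟩⟩ hq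
        simp only [hQ, Finset.coe_filter, Finset.mem_filter, Finset.mem_product,
          Set.mem_ofPred_eq] at hq
        obtain ⟨⟨⟨⟨⟨_, hj⟩, _, hl⟩, he, _⟩, _⟩, rfl⟩ := hq
        simp only [diffPairs, Finset.coe_filter, Finset.mem_product, Set.mem_ofPred_eq]
        exact ⟨⟨hj, hl⟩, by omega⟩
      · rintro ⟨⟨i, j⟩, ⟨k, l⟩⟩ hq ⟨⟨i', j'⟩, ⟨k', l'⟩⟩ hq' h
        simp only [Finset.coe_filter, Set.mem_ofPred_eq, Prod.ext_iff] at hq hq' h ⊢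
        grind
    · rintro ⟨⟨i, j⟩, ⟨k, l⟩⟩ hq
      simp only [hQ, Finset.coe_filter, Finset.mem_filter, Finset.mem_product,
        Set.mem_ofPred_eq] at hq
      obtain ⟨⟨⟨⟨hi, _⟩, hk, _⟩, _, hb⟩, hne⟩ := hq
      refine Finset.mem_coe.2 (Finset.mem_filter.2 ⟨Finset.mem_product.2 ⟨hi, hk⟩, hne, ?_⟩)
      exact (dni_sub_le_of_floor_eq hM hb).trans hMs
  have hsum : (Q.card : ℝ) ≤ (N : ℝ) ^ 2 + (closePairs a s α N).card * m := by
    rw [← Finset.card_filter_add_card_filter_not (s := Q) (fun q => q.1.1 = q.2.1)]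
    push_cast
    have : ((Q.filter fun q => q.1.1 = q.2.1).card : ℝ) ≤ (N : ℝ) ^ 2 := by exact_mod_cast hdiag
    linarith
  calc (addEnergy (trunc a N) : ℝ) ≤ M * Q.card := by exact_mod_cast henergy
    _ ≤ _ := by gcongr

theorem diffPairs_subset_closePairs {a : ℕ → ℕ} {N i j : ℕ} {s α : ℝ} (hij : a i ≠ a j)
    (h : dni (α * (a i : ℝ) - α * (a j : ℝ)) ≤ s / N) :
    diffPairs a (Finset.Icc 1 N) ((a i : ℤ) - a j) ⊆ closePairs a s α N := by
  intro p hp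
  obtain ⟨hp, he⟩ := Finset.mem_filter.1 hp
  refine Finset.mem_filter.2 ⟨hp, fun hpp => ?_, ?_⟩
  · rw [hpp] at he
    omega
  · have he' : (a p.1 : ℝ) - a p.2 = a i - a j := by exact_mod_cast he
    rwa [← mul_sub, he', mul_sub]

theorem disjoint_diffPairs_closePairs {a : ℕ → ℕ} {N i j : ℕ} {s α : ℝ}
    (h : s / N < dni (α * (a i : ℝ) - α * (a j : ℝ))) :
    Disjoint (diffPairs a (Finset.Icc 1 N) ((a i : ℤ) - a j)) (closePairs a s α N) := by
  rw [Finset.disjoint_left]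
  intro p hp hp'
  have he := (Finset.mem_filter.1 hp).2
  have hd := (Finset.mem_filter.1 hp').2.2
  have he' : (a p.1 : ℝ) - a p.2 = a i - a j := by exact_mod_cast he
  rw [← mul_sub, he', mul_sub] at hd
  exact absurd h (not_lt.2 hd)

theorem closePairs_mono (a : ℕ → ℕ) (α : ℝ) (N : ℕ) {s t : ℝ} (h : s ≤ t) :
    closePairs a s α N ⊆ closePairs a t α N := by
  intro p hp
  obtain ⟨hp, hne, hd⟩ := Finset.mem_filter.1 hp
  exact Finset.mem_filter.2 ⟨hp, hne, hd.trans (by gcongr)⟩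

/-- The pair correlation function jumps at the (scaled) location of a difference by at least the
normalised multiplicity of that difference. -/
theorem pcf_add_card_diffPairs_le {a : ℕ → ℕ} {N i j : ℕ} {s t α : ℝ} (hN : 0 < N)
    (hij : a i ≠ a j) (hs : s < N * dni (α * (a i : ℝ) - α * (a j : ℝ)))
    (ht : N * dni (α * (a i : ℝ) - α * (a j : ℝ)) ≤ t) :
    pcf a s α N + ((diffPairs a (Finset.Icc 1 N) ((a i : ℤ) - a j)).card : ℝ) / N ≤
      pcf a t α N := by
  have hN' : (0 : ℝ) < N := by exact_mod_cast hN
  rw [pcf_eq_card_closePairs, pcf_eq_card_closePairs, ← add_div]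
  gcongr
  have hdisj := disjoint_diffPairs_closePairs (a := a) (N := N) (i := i) (j := j) (s := s)
    (α := α) (by rwa [div_lt_iff₀' hN'])
  have hsub := Finset.union_subset
    (diffPairs_subset_closePairs (N := N) (s := t) (α := α) hij (by rwa [le_div_iff₀' hN']))
    (closePairs_mono a α N (hs.le.trans ht))
  have := Finset.card_le_card hsub
  rw [Finset.card_union_of_disjoint hdisj] at this
  rw [add_comm]
  exact_mod_cast this

theorem dni_nonneg (x : ℝ) : 0 ≤ dni x := abs_nonneg _

theorem pcf_nonneg (a : ℕ → ℕ) (s α : ℝ) (N : ℕ) : 0 ≤ pcf a s α N := by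
  unfold pcf; positivity

/-- A sequence with additive energy of maximal order has Poissonian pair correlations for no
dilation. -/
theorem not_hasPPC_of_large_energy (a : ℕ → ℕ) (hinj : Set.InjOn a (Set.Ici 1))
    (c : ℝ) (hc : 0 < c)
    (hE : ∀ N₀ : ℕ, ∃ N, N₀ ≤ N ∧ c * (N : ℝ) ^ 3 < (addEnergy (trunc a N) : ℝ)) (α : ℝ) :
    ¬ hasPPC a α := by
  intro hP
  set S : ℝ := 4 / c with hS
  have hS0 : 0 < S := by positivity
  set δ : ℝ := 1 / (2 * S + 1) with hδ
  have hδ0 : 0 < δ := by positivity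
  set η : ℝ := δ / 8 with hη
  have hη0 : 0 < η := by positivity
  set n : ℕ := ⌈S / η⌉₊ with hn
  have hgrid : ∀ᶠ N in atTop, ∀ k ∈ Finset.range (n + 1),
      |pcf a (k * η) α N - 2 * (k * η)| < η := by
    rw [Filter.eventually_all_finset]
    intro k _
    have := Metric.tendsto_nhds.1 (hP (k * η) (by positivity)) η hη0
    simpa only [Real.dist_eq] using this
  have hbound : ∀ᶠ N in atTop, pcf a S α N < 2 * S + 1 :=
    (hP S hS0.le).eventually_lt_const (by linarith)
  have hlarge : ∀ᶠ N : ℕ in atTop, 2 / c ≤ (N : ℝ) :=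
    tendsto_natCast_atTop_atTop.eventually_ge_atTop _
  obtain ⟨N₀, hN₀⟩ := eventually_atTop.1 (hgrid.and (hbound.and hlarge))
  obtain ⟨N, hN, henergy⟩ := hE N₀
  obtain ⟨hgrid, hbound, hlarge⟩ := hN₀ N hN
  have hN' : (0 : ℝ) < N := lt_of_lt_of_le (by positivity) hlarge
  have hNpos : 0 < N := by exact_mod_cast hN'
  have hcN : 1 ≤ c * N / 2 := by
    rw [div_le_iff₀ hc] at hlarge
    linarith
  set M : ℕ := ⌊c * N / 2⌋₊ with hM
  have hMpos : 0 < M := Nat.floor_pos.2 hcN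
  have hM' : (1 : ℝ) ≤ M := by exact_mod_cast hMpos
  have hMle : (M : ℝ) ≤ c * N / 2 := Nat.floor_le (by positivity)
  have hMlt : c * N / 2 < M + 1 := Nat.lt_floor_add_one _
  have hMs : 1 / (M : ℝ) ≤ S / N := by
    rw [hS, div_div, div_le_div_iff₀ (by positivity) (by positivity)]
    linarith
  obtain ⟨p, hp, hmult⟩ : ∃ p ∈ closePairs a S α N,
      δ * N < ((diffPairs a (Finset.Icc 1 N) ((a p.1 : ℤ) - a p.2)).card : ℝ) := by
    by_contra! hcon
    have hle := addEnergy_trunc_le a N M (hinj.mono fun x hx => (Finset.mem_Icc.1 hx).1) hMpos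
      S α (δ * N) hMs hcon
    rw [pcf_eq_card_closePairs, div_lt_iff₀ hN'] at hbound
    have hprod : ((closePairs a S α N).card : ℝ) * (δ * N) ≤ (N : ℝ) ^ 2 := by
      calc ((closePairs a S α N).card : ℝ) * (δ * N) ≤ ((2 * S + 1) * N) * (δ * N) := by gcongr
        _ = (N : ℝ) ^ 2 := by rw [hδ]; field_simp
    have : (M : ℝ) * ((N : ℝ) ^ 2 + (closePairs a S α N).card * (δ * N)) ≤
        c * N / 2 * ((N : ℝ) ^ 2 + (N : ℝ) ^ 2) := by gcongr
    nlinarith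
  obtain ⟨hpJ, hpne, hpd⟩ := Finset.mem_filter.1 hp
  obtain ⟨hp1, hp2⟩ := Finset.mem_product.1 hpJ
  have hane : a p.1 ≠ a p.2 := fun h =>
    hpne (hinj (Finset.mem_Icc.1 hp1).1 (Finset.mem_Icc.1 hp2).1 h)
  have hmult' : δ < ((diffPairs a (Finset.Icc 1 N) ((a p.1 : ℤ) - a p.2)).card : ℝ) / N := by
    rwa [lt_div_iff₀ hN']
  set t : ℝ := N * dni (α * (a p.1 : ℝ) - α * (a p.2 : ℝ)) with ht
  have ht0 : 0 ≤ t := mul_nonneg hN'.le (dni_nonneg _)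
  have htS : t ≤ S := by rwa [le_div_iff₀' hN'] at hpd
  have hkn : ⌈t / η⌉₊ ≤ n := Nat.ceil_mono (by gcongr)
  have hkt : t ≤ (⌈t / η⌉₊ : ℝ) * η := (div_le_iff₀ hη0).1 (Nat.le_ceil _)
  have hup := abs_lt.1 (hgrid _ (Finset.mem_range.2 (Nat.lt_succ_of_le hkn)))
  rcases hk : ⌈t / η⌉₊ with _ | k
  · rw [hk] at hup hkt
    have hjump := pcf_add_card_diffPairs_le (s := -1) hNpos hane (by linarith) hkt
    have := pcf_nonneg a (-1) α N
    norm_num at hup hjump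
    linarith
  · rw [hk] at hup hkt hkn
    have hlow := abs_lt.1 (hgrid k (Finset.mem_range.2 (by omega)))
    have hkt' : (k : ℝ) * η < t := by
      rw [← lt_div_iff₀ hη0, ← Nat.lt_ceil, hk]
      exact Nat.lt_succ_self k
    have hjump := pcf_add_card_diffPairs_le hNpos hane hkt' hkt
    push_cast at hup hjump
    linarith

theorem full_measure_of_large_energy
    (a : ℕ → ℕ) (ha : ∀ n, 1 ≤ n → a n < a (n + 1)) (hpos : 0 < a 1)
    (c : ℝ) (hc : 0 < c)
    (hE : ∀ N₀ : ℕ, ∃ N, N₀ ≤ N ∧ c * (N : ℝ) ^ 3 < (addEnergy (trunc a N) : ℝ)) :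
    volume (NPPC a) = 1 := by
  have hinj : Set.InjOn a (Set.Ici 1) :=
    (strictMonoOn_of_lt_add_one Set.ordConnected_Ici fun n _ hn _ => ha n hn).injOn
  have hall : NPPC a = Set.Ioo 0 1 :=
    Set.ext fun α => and_iff_left (not_hasPPC_of_large_energy a hinj c hc hE α)
  simp [hall]
end

section
/- Let f : ℝ_{>0} → ℝ_{>2} be a function increasing monotonically to ∞ satisfying f(x) = O((log x)^{−7/3} x^{1/3}). Suppose the series Σ_{n≥1} 1/(n f(n)) converges and that sup{ f(2x)/f(x) : x ≥ x₀ } < 2 for some x₀ > 0. Then there exists a strictly increasing sequence (a_n)_{n≥1} of positive integers with E(A_N) = Θ(N³ / f(N)) such that NPPC((a_n)_n) has Hausdorff dimension at least 1/(1+λ), where λ := liminf_{x→∞} log f(x)/log x is the lower order of f at infinity. -/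
open Filter MeasureTheory
open scoped Classical

/-- Positions of the binary digits that are forced to vanish. -/
def IsZeroPos (i : ℕ) : Prop := ∃ n, n ^ 3 ≤ i ∧ i < n ^ 3 + n

/-- Spread a binary digit sequence over the positions that are not forced to vanish. -/
noncomputable def spreadDigits (e : ℕ → Fin 2) (i : ℕ) : Fin 2 :=
  if IsZeroPos i then 0 else e (Nat.count (fun k => ¬ IsZeroPos k) i)

/-- Insert zeros at the forced positions of the binary expansion of `y`. -/
noncomputable def cantorMap (y : ℝ) : ℝ := Real.ofDigits (spreadDigits (Real.digits y 2))

theorem exists_count_eq_of_lt_count (p : ℕ → Prop) [DecidablePred p] {k m : ℕ}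
    (h : k < Nat.count p m) :
    ∃ i < m, p i ∧ Nat.count p i = k := by
  induction m with
  | zero => simp at h
  | succ m ih =>
    rw [Nat.count_succ] at h
    by_cases hk : k < Nat.count p m
    · obtain ⟨i, hi, h'⟩ := ih hk
      exact ⟨i, by omega, h'⟩
    · by_cases hp : p m
      · simp only [hp, if_true] at h
        exact ⟨m, by omega, hp, by omega⟩
      · simp only [hp, if_false] at h
        omega

theorem exists_cube_le_and_lt (m : ℕ) :
    ∃ n, n ^ 3 ≤ m ∧ m < (n + 1) ^ 3 := by
  induction m with
  | zero => exact ⟨0, by norm_num, by norm_num⟩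
  | succ m ih =>
    obtain ⟨n, h1, h2⟩ := ih
    by_cases h : m + 1 < (n + 1) ^ 3
    · exact ⟨n, by omega, h⟩
    · refine ⟨n + 1, by omega, ?_⟩
      have : (n + 1) ^ 3 < (n + 1 + 1) ^ 3 := Nat.pow_lt_pow_left (by omega) (by norm_num)
      omega

theorem sub_le_count_not_isZeroPos {n m : ℕ} (h1 : n ^ 3 ≤ m) (h2 : m < (n + 1) ^ 3) :
    (n : ℝ) ^ 3 - ((n : ℝ) + 1) ^ 2 ≤ Nat.count (fun k => ¬ IsZeroPos k) m := by
  have hcard : ((Finset.range m).filter IsZeroPos).card ≤ (n + 1) ^ 2 := by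
    have hsub : (Finset.range m).filter IsZeroPos ⊆
        (Finset.range (n + 1)).biUnion fun i => Finset.Ico (i ^ 3) (i ^ 3 + i) := by
      intro k hk
      simp only [Finset.mem_filter, Finset.mem_range, Finset.mem_biUnion, Finset.mem_Ico] at hk ⊢
      obtain ⟨hk, i, hi⟩ := hk
      exact ⟨i, lt_of_pow_lt_pow_left₀ 3 (by omega) (by omega), hi⟩
    calc _ ≤ _ := Finset.card_le_card hsub
      _ ≤ _ := Finset.card_biUnion_le
      _ ≤ ∑ i ∈ Finset.range (n + 1), (n + 1) := by
        refine Finset.sum_le_sum fun i hi => ?_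
        simp only [Nat.card_Ico, Finset.mem_range] at hi ⊢
        omega
      _ = (n + 1) ^ 2 := by simp [sq]
  have hsum : ((Finset.range m).filter IsZeroPos).card +
      ((Finset.range m).filter fun k => ¬ IsZeroPos k).card = m := by
    rw [Finset.card_filter_add_card_filter_not, Finset.card_range]
  rw [Nat.count_eq_card_filter_range]
  have h3 : n ^ 3 ≤ (n + 1) ^ 2 + ((Finset.range m).filter fun k => ¬ IsZeroPos k).card := by omega
  have h4 : ((n ^ 3 : ℕ) : ℝ) ≤
      (((n + 1) ^ 2 + ((Finset.range m).filter fun k => ¬ IsZeroPos k).card : ℕ) : ℝ) := by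
    exact_mod_cast h3
  push_cast at h4
  linarith

theorem ofDigits_le_of_first_diff {d d' : ℕ → Fin 2} {m : ℕ} (h : ∀ i < m, d i = d' i)
    (hd : d m = 1) (hd' : d' m = 0) : Real.ofDigits d' ≤ Real.ofDigits d := by
  have hs : ∑ i ∈ Finset.range m, Real.ofDigitsTerm d i =
      ∑ i ∈ Finset.range m, Real.ofDigitsTerm d' i :=
    Finset.sum_congr rfl fun i hi => by simp [Real.ofDigitsTerm, h i (Finset.mem_range.1 hi)]
  rw [Real.ofDigits_eq_sum_add_ofDigits d (m + 1), Real.ofDigits_eq_sum_add_ofDigits d' (m + 1),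
    Finset.sum_range_succ, Finset.sum_range_succ, hs]
  have h1 := mul_le_of_le_one_right (a := ((2 : ℝ) ^ (m + 1))⁻¹) (by positivity)
    (Real.ofDigits_le_one fun i => d' (i + (m + 1)))
  have h2 : 0 ≤ ((2 : ℝ) ^ (m + 1))⁻¹ * Real.ofDigits (fun i => d (i + (m + 1))) :=
    mul_nonneg (by positivity) (Real.ofDigits_nonneg _)
  have h3 : Real.ofDigitsTerm d m = ((2 : ℝ) ^ (m + 1))⁻¹ := by simp [Real.ofDigitsTerm, hd]
  have h4 : Real.ofDigitsTerm d' m = 0 := by simp [Real.ofDigitsTerm, hd']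
  rw [h3, h4]
  push_cast
  linarith

theorem ofDigits_update_zero {d : ℕ → Fin 2} {z : ℕ} (hz : d z = 0) :
    Real.ofDigits (Function.update d z 1) = Real.ofDigits d + ((2 : ℝ) ^ (z + 1))⁻¹ := by
  have hs : ∑ i ∈ Finset.range z, Real.ofDigitsTerm (Function.update d z 1) i =
      ∑ i ∈ Finset.range z, Real.ofDigitsTerm d i :=
    Finset.sum_congr rfl fun i hi => by
      simp [Real.ofDigitsTerm, Function.update_of_ne (Finset.mem_range.1 hi).ne]
  have ht : (fun i => Function.update d z 1 (i + (z + 1))) = fun i => d (i + (z + 1)) :=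
    funext fun i => Function.update_of_ne (by omega) _ _
  rw [Real.ofDigits_eq_sum_add_ofDigits d (z + 1),
    Real.ofDigits_eq_sum_add_ofDigits (Function.update d z 1) (z + 1),
    Finset.sum_range_succ, Finset.sum_range_succ, hs, ht]
  simp [Real.ofDigitsTerm, hz]
  ring

theorem gap_of_first_diff {d d' : ℕ → Fin 2} {m z : ℕ} (h : ∀ i < m, d i = d' i)
    (hne : d m ≠ d' m) (hmz : m < z) (hz : d z = 0) (hz' : d' z = 0) :
    ((2 : ℝ) ^ (z + 1))⁻¹ ≤ |Real.ofDigits d - Real.ofDigits d'| := by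
  have key : ∀ {u v : ℕ → Fin 2}, (∀ i < m, u i = v i) → u m = 1 → v m = 0 → v z = 0 →
      ((2 : ℝ) ^ (z + 1))⁻¹ ≤ Real.ofDigits u - Real.ofDigits v := by
    intro u v huv hu hv hvz
    have := ofDigits_le_of_first_diff (d := u) (d' := Function.update v z 1) (m := m)
      (fun i hi => by rw [Function.update_of_ne (by omega), huv i hi]) hu
      (by rw [Function.update_of_ne (by omega), hv])
    rw [ofDigits_update_zero hvz] at this
    linarith
  have h01 : (d m = 1 ∧ d' m = 0) ∨ (d' m = 1 ∧ d m = 0) := by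
    revert hne
    generalize d m = x
    generalize d' m = y
    revert x y
    decide
  rcases h01 with ⟨h1, h0⟩ | ⟨h1, h0⟩
  · exact (key h h1 h0 hz').trans (le_abs_self _)
  · rw [abs_sub_comm]
    exact (key (fun i hi => (h i hi).symm) h1 h0 hz).trans (le_abs_self _)

theorem cantorMap_antiHolder {r : ℝ} (hr0 : 0 < r) (hr1 : r < 1) :
    ∃ C : ℝ, 0 < C ∧ ∀ y ∈ Set.Ico (0 : ℝ) 1, ∀ y' ∈ Set.Ico (0 : ℝ) 1,
      |y - y'| ≤ C * |cantorMap y - cantorMap y'| ^ r := by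
  set c : ℝ := 64 / (1 - r) ^ 2 + 2
  refine ⟨2 ^ c, by positivity, fun y hy y' hy' => ?_⟩
  set d := spreadDigits (Real.digits y 2) with hd
  set d' := spreadDigits (Real.digits y' 2) with hd'
  have hagree : ∀ m, (∀ i < m, d i = d' i) →
      ∀ k < Nat.count (fun k => ¬ IsZeroPos k) m, Real.digits y 2 k = Real.digits y' 2 k := by
    intro m hm k hk
    obtain ⟨i, hi, hp, rfl⟩ := exists_count_eq_of_lt_count _ hk
    simpa [hd, hd', spreadDigits, hp] using hm i hi
  have hdist : ∀ m, (∀ i < m, d i = d' i) →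
      |y - y'| ≤ ((2 : ℝ) ^ (Nat.count (fun k => ¬ IsZeroPos k) m))⁻¹ := by
    intro m hm
    have := Real.abs_ofDigits_sub_ofDigits_le (hagree m hm)
    rwa [Real.ofDigits_digits (by norm_num) hy, Real.ofDigits_digits (by norm_num) hy'] at this
  have hzero : ∀ e n, 0 < n → spreadDigits e (n ^ 3) = 0 := fun e n hn =>
    if_pos ⟨n, le_rfl, by omega⟩
  by_cases hall : ∀ i, d i = d' i
  · have hdd : Real.digits y 2 = Real.digits y' 2 := by
      funext k
      refine hagree ((k + 3) ^ 3) (fun i _ => hall i) k ?_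
      have h := sub_le_count_not_isZeroPos (n := k + 3) le_rfl
        (Nat.pow_lt_pow_left (Nat.lt_succ_self _) (by norm_num))
      have hk : (0 : ℝ) ≤ k := Nat.cast_nonneg k
      have : (k : ℝ) < Nat.count (fun k => ¬ IsZeroPos k) ((k + 3) ^ 3) := by
        refine lt_of_lt_of_le ?_ h
        push_cast
        nlinarith [pow_nonneg hk 3, pow_nonneg hk 2]
      exact_mod_cast this
    rw [← Real.ofDigits_digits (b := 2) (by norm_num) hy,
      ← Real.ofDigits_digits (b := 2) (by norm_num) hy', hdd]
    simp only [sub_self, abs_zero]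
    positivity
  push Not at hall
  set m := Nat.find hall
  have hm : d m ≠ d' m := Nat.find_spec hall
  have hlt : ∀ i < m, d i = d' i := fun i hi => not_not.1 (Nat.find_min hall hi)
  obtain ⟨n, h1, h2⟩ := exists_cube_le_and_lt m
  have hgap := gap_of_first_diff hlt hm h2 (hzero _ _ n.succ_pos) (hzero _ _ n.succ_pos)
  have hcount := sub_le_count_not_isZeroPos h1 h2
  have hexp : r * (((n : ℝ) + 1) ^ 3 + 1) ≤ Nat.count (fun k => ¬ IsZeroPos k) m + c := by
    refine le_trans ?_ (add_le_add_left hcount c)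
    have hn : (0 : ℝ) ≤ n := Nat.cast_nonneg n
    have hδ : 0 < 1 - r := by linarith
    generalize (n : ℝ) = t at hn ⊢
    have hc : c * (1 - r) ^ 2 = 64 + 2 * (1 - r) ^ 2 := by
      simp only [c]; field_simp
    rcases le_total 4 ((1 - r) * (t + 1)) with h | h
    · have : 0 ≤ (t + 1) ^ 2 * ((1 - r) * (t + 1) - 4) := by
        apply mul_nonneg (by positivity); linarith
      have : 2 ≤ c := by simp only [c]; linarith [show 0 ≤ 64 / (1 - r) ^ 2 by positivity]
      nlinarith
    · have h16 : ((1 - r) * (t + 1)) ^ 2 ≤ 16 := by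
        have : 0 ≤ (1 - r) * (t + 1) := by positivity
        nlinarith
      have h4 : 4 * (t + 1) ^ 2 + 2 ≤ c := by
        have : 4 * (t + 1) ^ 2 ≤ 64 / (1 - r) ^ 2 := by
          rw [le_div_iff₀ (by positivity)]; nlinarith
        simp only [c]; linarith
      have : 0 ≤ (1 - r) * (t + 1) ^ 3 := by positivity
      nlinarith
  calc |y - y'| ≤ ((2 : ℝ) ^ (Nat.count (fun k => ¬ IsZeroPos k) m))⁻¹ := hdist m hlt
    _ = (2 : ℝ) ^ (-(Nat.count (fun k => ¬ IsZeroPos k) m : ℝ)) := by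
      rw [Real.rpow_neg (by norm_num), Real.rpow_natCast]
    _ ≤ (2 : ℝ) ^ (c + -(((n : ℝ) + 1) ^ 3 + 1) * r) := by
      apply Real.rpow_le_rpow_of_exponent_le (by norm_num); linarith
    _ = 2 ^ c * (((2 : ℝ) ^ ((n + 1) ^ 3 + 1))⁻¹) ^ r := by
      rw [Real.rpow_add (by norm_num), Real.rpow_mul (by norm_num), Real.rpow_neg (by norm_num)]
      have : (2 : ℝ) ^ (((n : ℝ) + 1) ^ 3 + 1) = 2 ^ ((n + 1) ^ 3 + 1) := by
        exact_mod_cast Real.rpow_natCast 2 ((n + 1) ^ 3 + 1)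
      rw [this]
    _ ≤ 2 ^ c * |cantorMap y - cantorMap y'| ^ r := by
      gcongr
      exact hgap

theorem one_le_dimH_image_cantorMap : 1 ≤ dimH (cantorMap '' Set.Ioo 0 1) := by
  have hmain : ∀ r : NNReal, 0 < r → r < 1 → (r : ENNReal) ≤ dimH (cantorMap '' Set.Ioo 0 1) := by
    intro r hr0 hr1
    obtain ⟨C, hC, h⟩ :=
      cantorMap_antiHolder (r := r) (by exact_mod_cast hr0) (by exact_mod_cast hr1)
    have hinj : Set.InjOn cantorMap (Set.Ioo 0 1) := by
      intro y hy y' hy' heq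
      have := h y ⟨hy.1.le, hy.2⟩ y' ⟨hy'.1.le, hy'.2⟩
      rw [heq, sub_self, abs_zero, Real.zero_rpow (by exact_mod_cast hr0.ne'), mul_zero] at this
      exact sub_eq_zero.1 (abs_nonpos_iff.1 this)
    set g := Function.invFunOn cantorMap (Set.Ioo (0 : ℝ) 1)
    have hleft : Set.LeftInvOn g cantorMap (Set.Ioo 0 1) := hinj.leftInvOn_invFunOn
    have hhol : HolderOnWith C.toNNReal r g (cantorMap '' Set.Ioo 0 1) := by
      rintro _ ⟨y, hy, rfl⟩ _ ⟨y', hy', rfl⟩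
      rw [hleft hy, hleft hy', edist_dist, edist_dist, Real.dist_eq, Real.dist_eq,
        ENNReal.ofReal_rpow_of_nonneg (abs_nonneg _) r.coe_nonneg]
      change _ ≤ ENNReal.ofReal C * _
      rw [← ENNReal.ofReal_mul hC.le]
      exact ENNReal.ofReal_le_ofReal (h y ⟨hy.1.le, hy.2⟩ y' ⟨hy'.1.le, hy'.2⟩)
    have hdim := hhol.dimH_image_le hr0
    rw [hleft.image_image, Real.dimH_of_nonempty_interior (by simp [interior_Ioo]),
      ENNReal.le_div_iff_mul_le (by simp [hr0.ne']) (by simp)] at hdim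
    simpa using hdim
  refine le_of_forall_lt fun x hx => ?_
  lift x to NNReal using (hx.trans ENNReal.one_lt_top).ne
  obtain ⟨r, hxr, hr⟩ := exists_between (show x < 1 by exact_mod_cast hx)
  exact lt_of_lt_of_le (by exact_mod_cast hxr) (hmain r (pos_of_gt hxr) hr)

theorem cantorMap_mem_Ioo {y : ℝ} (hy : y ∈ Set.Ioo (0 : ℝ) 1) :
    cantorMap y ∈ Set.Ioo (0 : ℝ) 1 := by
  constructor
  · refine lt_of_le_of_ne (Real.ofDigits_nonneg _) fun h0 => ?_
    obtain ⟨C, -, h⟩ := cantorMap_antiHolder (r := 1 / 2) (by norm_num) (by norm_num)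
    have h1 := h y ⟨hy.1.le, hy.2⟩ 0 ⟨le_rfl, one_pos⟩
    have hz : cantorMap 0 = 0 := by
      simp [cantorMap, Real.ofDigits, Real.ofDigitsTerm, spreadDigits, Real.digits]
    rw [← h0, hz, sub_self, abs_zero, Real.zero_rpow (by norm_num), mul_zero, sub_zero] at h1
    exact hy.1.ne' (abs_nonpos_iff.1 h1)
  · have hz : spreadDigits (Real.digits y 2) 1 = 0 := if_pos ⟨1, by norm_num, by norm_num⟩
    have h1 := Real.ofDigits_le_one (Function.update (spreadDigits (Real.digits y 2)) 1 1)
    rw [ofDigits_update_zero hz] at h1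
    norm_num at h1
    exact lt_of_lt_of_le (lt_add_of_pos_right _ (by norm_num)) h1

theorem cantorMap_mul_pow (y : ℝ) (n : ℕ) :
    ∃ (k : ℤ) (t : ℝ), cantorMap y * 2 ^ (n ^ 3) = k + t ∧ 0 ≤ t ∧ t ≤ ((2 : ℝ) ^ n)⁻¹ := by
  have hint : ∀ (d : ℕ → Fin 2) (m : ℕ), ∃ k : ℤ,
      (∑ i ∈ Finset.range m, Real.ofDigitsTerm d i) * 2 ^ m = k := by
    intro d m
    induction m with
    | zero => exact ⟨0, by simp⟩
    | succ m ih =>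
      obtain ⟨k, hk⟩ := ih
      refine ⟨2 * k + (d m : ℕ), ?_⟩
      rw [Finset.sum_range_succ, add_mul, pow_succ, ← mul_assoc, hk, Real.ofDigitsTerm]
      push_cast
      field_simp
      ring
  set d := spreadDigits (Real.digits y 2) with hd
  obtain ⟨k, hk⟩ := hint d (n ^ 3)
  refine ⟨k, Real.ofDigits fun i => d (i + n ^ 3), ?_, Real.ofDigits_nonneg _, ?_⟩
  · rw [cantorMap, Real.ofDigits_eq_sum_add_ofDigits _ (n ^ 3), add_mul, hk]
    push_cast
    field_simp
    rfl
  · have h := Real.abs_ofDigits_sub_ofDigits_le (b := 2) (x := fun i => d (i + n ^ 3))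
      (y := fun _ => 0) (n := n) fun i hi => if_pos ⟨n, by omega, by omega⟩
    have h0 : Real.ofDigits (fun _ : ℕ => (0 : Fin 2)) = 0 := by
      simp [Real.ofDigits, Real.ofDigitsTerm]
    rw [h0, sub_zero] at h
    exact (le_abs_self _).trans (by exact_mod_cast h)

/-- In the index block `[2 ^ j, 2 ^ (j + 1))`, an arithmetic progression of length `M j` with
common difference `2 ^ (2 ^ j) ^ 3`, followed by the very sparse terms `2 ^ n ^ 3`. -/
def blockSeq (M : ℕ → ℕ) (n : ℕ) : ℕ :=
  if n < 2 ^ Nat.log 2 n + M (Nat.log 2 n) then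
    2 ^ ((2 ^ Nat.log 2 n) ^ 3) * (n - 2 ^ Nat.log 2 n + 1)
  else 2 ^ (n ^ 3)

section BlockSeq

variable {M : ℕ → ℕ}

theorem blockSeq_of_mem_progression (hM : ∀ j, M j ≤ 2 ^ j) {j n : ℕ} (h1 : 2 ^ j ≤ n)
    (h2 : n < 2 ^ j + M j) : blockSeq M n = 2 ^ ((2 ^ j) ^ 3) * (n - 2 ^ j + 1) := by
  have hlog : Nat.log 2 n = j :=
    Nat.log_eq_of_pow_le_of_lt_pow h1 (by have := hM j; rw [pow_succ]; omega)
  simp only [blockSeq, hlog, h2, if_true]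

theorem blockSeq_of_not_mem_progression {j n : ℕ} (h1 : 2 ^ j + M j ≤ n)
    (h2 : n < 2 ^ (j + 1)) : blockSeq M n = 2 ^ (n ^ 3) := by
  have hlog : Nat.log 2 n = j := Nat.log_eq_of_pow_le_of_lt_pow (by omega) h2
  simp only [blockSeq, hlog, if_neg (not_lt.2 h1)]

theorem blockSeq_eq_or (M : ℕ → ℕ) {n : ℕ} (hn : 1 ≤ n) :
    blockSeq M n = 2 ^ (n ^ 3) ∨ ∃ j, 2 ^ j < n ∧ n < 2 ^ j + M j := by
  have hle := Nat.pow_log_le_self 2 (show n ≠ 0 by omega)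
  by_cases h : n < 2 ^ Nat.log 2 n + M (Nat.log 2 n)
  · rcases hle.eq_or_lt with heq | hlt
    · left
      rw [blockSeq, if_pos h, heq]
      simp
    · exact Or.inr ⟨_, hlt, h⟩
  · exact Or.inl (if_neg h)

theorem blockSeq_le (hM : ∀ j, M j ≤ 2 ^ j) {n : ℕ} (hn : 1 ≤ n) :
    blockSeq M n ≤ 2 ^ (n ^ 3) := by
  rcases blockSeq_eq_or M hn with h | ⟨j, h1, h2⟩
  · exact h.le
  · rw [blockSeq_of_mem_progression hM h1.le h2]
    obtain ⟨r, rfl⟩ := Nat.exists_eq_add_of_le h1.le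
    calc 2 ^ ((2 ^ j) ^ 3) * (2 ^ j + r - 2 ^ j + 1) ≤ 2 ^ ((2 ^ j) ^ 3) * 2 ^ r := by
          gcongr
          rw [Nat.add_sub_cancel_left]
          exact Nat.lt_two_pow_self
      _ = 2 ^ ((2 ^ j) ^ 3 + r) := (pow_add _ _ _).symm
      _ ≤ _ := by
        apply Nat.pow_le_pow_right (by norm_num)
        have : 0 < 2 ^ j := by positivity
        generalize 2 ^ j = t at this
        have h3 : r ≤ t ^ 2 * r := Nat.le_mul_of_pos_left _ (by positivity)
        nlinarith [Nat.zero_le (t ^ 2 * r), Nat.zero_le (t * r ^ 2), Nat.zero_le (r ^ 3)]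

theorem two_mul_blockSeq_le (hM : ∀ j, M j ≤ 2 ^ j) {x y : ℕ} (hx : 1 ≤ x) (hxy : x < y) :
    2 * blockSeq M x ≤ 2 ^ (y ^ 3) := by
  calc 2 * blockSeq M x ≤ 2 * 2 ^ (x ^ 3) := by gcongr; exact blockSeq_le hM hx
    _ = 2 ^ (x ^ 3 + 1) := by ring
    _ ≤ _ := Nat.pow_le_pow_right (by norm_num)
        (Nat.succ_le_of_lt (Nat.pow_lt_pow_left hxy (by norm_num)))

theorem blockSeq_pos (M : ℕ → ℕ) (n : ℕ) : 0 < blockSeq M n := by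
  unfold blockSeq
  split_ifs <;> positivity

theorem blockSeq_lt_succ (hM : ∀ j, M j ≤ 2 ^ j) {n : ℕ} (hn : 1 ≤ n) :
    blockSeq M n < blockSeq M (n + 1) := by
  rcases blockSeq_eq_or M (show 1 ≤ n + 1 by omega) with h | ⟨j, h1, h2⟩
  · have := two_mul_blockSeq_le hM hn (Nat.lt_succ_self n)
    have := blockSeq_pos M n
    simp only [Nat.succ_eq_add_one] at *
    omega
  · rw [blockSeq_of_mem_progression hM h1.le h2,
      blockSeq_of_mem_progression (j := j) hM (by omega) (by omega)]
    exact Nat.mul_lt_mul_of_pos_left (by omega) (by positivity)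

theorem blockSeq_strictMonoOn (hM : ∀ j, M j ≤ 2 ^ j) :
    StrictMonoOn (blockSeq M) (Set.Ici 1) := by
  intro x hx y _ hxy
  induction y, hxy using Nat.le_induction with
  | base => exact blockSeq_lt_succ hM hx
  | succ y hy ih =>
    have hx' : 1 ≤ x := hx
    have hy' : x + 1 ≤ y := hy
    exact (ih (show 1 ≤ y by omega)).trans (blockSeq_lt_succ hM (by omega))

/-- The indices of the `j`-th arithmetic progression. -/
abbrev progIdx (M : ℕ → ℕ) (j : ℕ) : Finset ℕ := Finset.Ico (2 ^ j) (2 ^ j + M j)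

theorem mem_progIdx_of_add_eq (hM : ∀ j, M j ≤ 2 ^ j) {k l p q : ℕ} (hl : 1 ≤ l)
    (hq : 1 ≤ q) (hqp : q ≤ p) (hpk : p < k)
    (h : blockSeq M k + blockSeq M l = blockSeq M p + blockSeq M q) :
    ∃ j, k ∈ progIdx M j ∧ l ∈ progIdx M j ∧ p ∈ progIdx M j ∧ q ∈ progIdx M j := by
  have hmono := blockSeq_strictMonoOn hM
  have hp : 1 ≤ p := hq.trans hqp
  have hlpos := blockSeq_pos M l
  have hqple : blockSeq M q ≤ blockSeq M p := hmono.monotoneOn hq hp hqp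
  rcases blockSeq_eq_or M (show 1 ≤ k by omega) with hk | ⟨j, h1, h2⟩
  · have := two_mul_blockSeq_le hM hp hpk
    omega
  have hkval := blockSeq_of_mem_progression hM h1.le h2
  set D := 2 ^ ((2 ^ j) ^ 3) with hD
  have hDpos : 0 < D := by positivity
  have hsmall : ∀ x, 1 ≤ x → x < 2 ^ j → 2 * blockSeq M x ≤ D :=
    fun x hx hxj => two_mul_blockSeq_le hM hx hxj
  have hpj : 2 ^ j ≤ p := by
    by_contra hcon
    have h3 := hsmall p hp (by omega)
    have h4 : D ≤ blockSeq M k := by rw [hkval]; exact Nat.le_mul_of_pos_right _ (by omega)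
    omega
  have hpval := blockSeq_of_mem_progression hM hpj (by omega)
  obtain ⟨e, rfl⟩ := Nat.exists_eq_add_of_lt hpk
  have hdiff : blockSeq M (p + e + 1) = blockSeq M p + D * (e + 1) := by
    rw [hkval, hpval, ← mul_add]
    congr 1
    omega
  have hqeq : blockSeq M q = blockSeq M l + D * (e + 1) := by omega
  have hDe : D ≤ D * (e + 1) := Nat.le_mul_of_pos_right _ (by omega)
  have hqj : 2 ^ j ≤ q := by
    by_contra hcon
    have h3 := hsmall q hq (by omega)
    omega
  have hlq : l < q := (hmono.lt_iff_lt hl hq).1 (by omega)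
  have hqval := blockSeq_of_mem_progression hM hqj (show q < 2 ^ j + M j by omega)
  have hlj : 2 ^ j ≤ l := by
    by_contra hcon
    have h3 := hsmall l hl (by omega)
    have hdvd : D ∣ blockSeq M l := by
      rw [← Nat.dvd_add_left (Dvd.intro (e + 1) rfl), ← hqeq, hqval]
      exact Dvd.intro _ rfl
    have := Nat.le_of_dvd hlpos hdvd
    omega
  refine ⟨j, ?_⟩
  simp only [progIdx, Finset.mem_Ico]
  omega

theorem eq_or_mem_progIdx_of_add_eq (hM : ∀ j, M j ≤ 2 ^ j) {k l p q : ℕ} (hk : 1 ≤ k)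
    (hl : 1 ≤ l) (hp : 1 ≤ p) (hq : 1 ≤ q)
    (h : blockSeq M k + blockSeq M l = blockSeq M p + blockSeq M q) :
    (k = p ∧ l = q) ∨ (k = q ∧ l = p) ∨
      ∃ j, k ∈ progIdx M j ∧ l ∈ progIdx M j ∧ p ∈ progIdx M j ∧ q ∈ progIdx M j := by
  have hinj := (blockSeq_strictMonoOn hM).injOn
  by_cases h1 : k = p
  · subst h1
    exact Or.inl ⟨rfl, hinj hl hq (by omega)⟩
  by_cases h2 : k = q
  · subst h2
    exact Or.inr (Or.inl ⟨rfl, hinj hl hp (by omega)⟩)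
  by_cases h3 : l = p
  · subst h3
    exact Or.inr (Or.inl ⟨hinj hk hq (by omega), rfl⟩)
  by_cases h4 : l = q
  · subst h4
    exact Or.inl ⟨hinj hk hp (by omega), rfl⟩
  refine Or.inr (Or.inr ?_)
  rcases le_total k l with hkl | hkl <;> rcases le_total p q with hpq | hpq
  · rcases lt_or_gt_of_ne h4 with h' | h'
    · obtain ⟨j, ha, hb, hc, hd⟩ := mem_progIdx_of_add_eq (k := q) (l := p) (p := l) (q := k)
        hM hp hk hkl h' (by omega)
      exact ⟨j, hd, hc, hb, ha⟩
    · obtain ⟨j, ha, hb, hc, hd⟩ := mem_progIdx_of_add_eq (k := l) (l := k) (p := q) (q := p)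
        hM hk hp hpq h' (by omega)
      exact ⟨j, hb, ha, hd, hc⟩
  · rcases lt_or_gt_of_ne h3 with h' | h'
    · obtain ⟨j, ha, hb, hc, hd⟩ := mem_progIdx_of_add_eq (k := p) (l := q) (p := l) (q := k)
        hM hq hk hkl h' (by omega)
      exact ⟨j, hd, hc, ha, hb⟩
    · obtain ⟨j, ha, hb, hc, hd⟩ := mem_progIdx_of_add_eq (k := l) (l := k) (p := p) (q := q)
        hM hk hq hpq h' (by omega)
      exact ⟨j, hb, ha, hc, hd⟩
  · rcases lt_or_gt_of_ne h2 with h' | h'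
    · obtain ⟨j, ha, hb, hc, hd⟩ := mem_progIdx_of_add_eq (k := q) (l := p) (p := k) (q := l)
        hM hp hl hkl h' (by omega)
      exact ⟨j, hc, hd, hb, ha⟩
    · obtain ⟨j, ha, hb, hc, hd⟩ := mem_progIdx_of_add_eq (k := k) (l := l) (p := q) (q := p)
        hM hl hp hpq h' (by omega)
      exact ⟨j, ha, hb, hd, hc⟩
  · rcases lt_or_gt_of_ne h1 with h' | h'
    · obtain ⟨j, ha, hb, hc, hd⟩ := mem_progIdx_of_add_eq (k := p) (l := q) (p := k) (q := l)
        hM hq hl hkl h' (by omega)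
      exact ⟨j, hc, hd, ha, hb⟩
    · obtain ⟨j, ha, hb, hc, hd⟩ := mem_progIdx_of_add_eq (k := k) (l := l) (p := p) (q := q)
        hM hl hq hpq h' (by omega)
      exact ⟨j, ha, hb, hc, hd⟩

theorem add_eq_of_mem_progIdx (hM : ∀ j, M j ≤ 2 ^ j) {j k l p q : ℕ} (hk : k ∈ progIdx M j)
    (hl : l ∈ progIdx M j) (hp : p ∈ progIdx M j) (hq : q ∈ progIdx M j)
    (h : blockSeq M k + blockSeq M l = blockSeq M p + blockSeq M q) : k + l = p + q := by
  simp only [progIdx, Finset.mem_Ico] at hk hl hp hq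
  rw [blockSeq_of_mem_progression hM hk.1 hk.2, blockSeq_of_mem_progression hM hl.1 hl.2,
    blockSeq_of_mem_progression hM hp.1 hp.2, blockSeq_of_mem_progression hM hq.1 hq.2,
    ← mul_add, ← mul_add] at h
  have := Nat.eq_of_mul_eq_mul_left (by positivity) h
  omega

theorem addEnergy_blockSeq_le (hM : ∀ j, M j ≤ 2 ^ j) (N : ℕ) :
    addEnergy (trunc (blockSeq M) N) ≤
      2 * N ^ 2 + ∑ j ∈ Finset.range (Nat.log 2 N + 1), M j ^ 3 := by
  set I := Finset.Icc 1 N with hI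
  set A := (I ×ˢ I).image fun x => (x, x)
  set B := (I ×ˢ I).image fun x => (x, (x.2, x.1))
  set P := (Finset.range (Nat.log 2 N + 1)).biUnion fun j =>
    (progIdx M j ×ˢ progIdx M j ×ˢ progIdx M j).image
      fun x => ((x.1, x.2.1), (x.2.2, x.1 + x.2.1 - x.2.2))
  set φ : (ℕ × ℕ) × (ℕ × ℕ) → (ℕ × ℕ) × (ℕ × ℕ) :=
    Prod.map (Prod.map (blockSeq M) (blockSeq M)) (Prod.map (blockSeq M) (blockSeq M))
  have hsub : ((trunc (blockSeq M) N ×ˢ trunc (blockSeq M) N) ×ˢ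
      (trunc (blockSeq M) N ×ˢ trunc (blockSeq M) N)).filter
        (fun q => q.1.1 + q.1.2 = q.2.1 + q.2.2) ⊆ ((A ∪ B) ∪ P).image φ := by
    rintro ⟨⟨x, y⟩, z, w⟩ hx
    simp only [Finset.mem_filter, Finset.mem_product, trunc, Finset.mem_image] at hx
    obtain ⟨⟨⟨⟨k, hk, rfl⟩, l, hl, rfl⟩, ⟨p, hp, rfl⟩, q, hq, rfl⟩, h⟩ := hx
    refine Finset.mem_image.2 ⟨((k, l), (p, q)), ?_, rfl⟩
    have hk1 := (Finset.mem_Icc.1 hk).1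
    have hl1 := (Finset.mem_Icc.1 hl).1
    have hp1 := (Finset.mem_Icc.1 hp).1
    have hq1 := (Finset.mem_Icc.1 hq).1
    rcases eq_or_mem_progIdx_of_add_eq hM hk1 hl1 hp1 hq1 h with
      ⟨rfl, rfl⟩ | ⟨rfl, rfl⟩ | ⟨j, hkj, hlj, hpj, hqj⟩
    · refine Finset.mem_union_left _
        (Finset.mem_union_left _ (Finset.mem_image.2 ⟨(k, l), ?_, rfl⟩))
      exact Finset.mem_product.2 ⟨hk, hl⟩
    · refine Finset.mem_union_left _
        (Finset.mem_union_right _ (Finset.mem_image.2 ⟨(k, l), ?_, rfl⟩))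
      exact Finset.mem_product.2 ⟨hk, hl⟩
    · have hadd := add_eq_of_mem_progIdx hM hkj hlj hpj hqj h
      refine Finset.mem_union_right _ (Finset.mem_biUnion.2 ⟨j, ?_, ?_⟩)
      · have h1 : 2 ^ j ≤ N := (Finset.mem_Ico.1 hkj).1.trans (Finset.mem_Icc.1 hk).2
        exact Finset.mem_range.2 (Nat.lt_succ_of_le (Nat.le_log_of_pow_le (by norm_num) h1))
      · refine Finset.mem_image.2 ⟨(k, l, p), ?_, ?_⟩
        · exact Finset.mem_product.2 ⟨hkj, Finset.mem_product.2 ⟨hlj, hpj⟩⟩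
        · simp only [Prod.mk.injEq, true_and]
          omega
  have hcard : (I ×ˢ I).card = N ^ 2 := by simp [hI, sq]
  have hA : A.card ≤ N ^ 2 := Finset.card_image_le.trans hcard.le
  have hB : B.card ≤ N ^ 2 := Finset.card_image_le.trans hcard.le
  have hP : P.card ≤ ∑ j ∈ Finset.range (Nat.log 2 N + 1), M j ^ 3 := by
    refine Finset.card_biUnion_le.trans (Finset.sum_le_sum fun j _ => ?_)
    refine Finset.card_image_le.trans (le_of_eq ?_)
    simp only [progIdx, Finset.card_product, Nat.card_Ico, Nat.add_sub_cancel_left]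
    ring
  have h1 := (Finset.card_le_card hsub).trans Finset.card_image_le
  have h2 := Finset.card_union_le (A ∪ B) P
  have h3 := Finset.card_union_le A B
  unfold addEnergy
  omega

theorem le_addEnergy_blockSeq (hM : ∀ j, M j ≤ 2 ^ j) {j N : ℕ} (hN : 2 ^ j + M j ≤ N + 1) :
    ((M j + 1) / 2) ^ 3 ≤ addEnergy (trunc (blockSeq M) N) := by
  set h := (M j + 1) / 2 with hh
  set D := 2 ^ ((2 ^ j) ^ 3) with hD
  have hDpos : 0 < D := by positivity
  have h2j : 0 < 2 ^ j := by positivity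
  have hmem : ∀ r < M j, D * (r + 1) ∈ trunc (blockSeq M) N := fun r hr =>
    Finset.mem_image.2 ⟨2 ^ j + r, Finset.mem_Icc.2 ⟨by omega, by omega⟩, by
      rw [blockSeq_of_mem_progression (j := j) hM (by omega) (by omega), Nat.add_sub_cancel_left]⟩
  have hcard : (Finset.range h ×ˢ Finset.range h ×ˢ Finset.range h).card = h ^ 3 := by
    simp only [Finset.card_product, Finset.card_range]
    ring
  rw [← hcard]
  refine Finset.card_le_card_of_injOn (fun x => ((D * (x.1 + x.2.1 + 1), D * (x.2.2 + 1)),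
    (D * (x.1 + 1), D * (x.2.1 + x.2.2 + 1)))) ?_ ?_
  · rintro ⟨x, y, z⟩ hx
    simp only [Finset.coe_product, Set.mem_prod, Finset.mem_coe, Finset.mem_range] at hx
    simp only [Finset.mem_coe, Finset.mem_filter, Finset.mem_product]
    refine ⟨⟨⟨hmem _ ?_, hmem _ ?_⟩, hmem _ ?_, hmem _ ?_⟩, by ring⟩ <;> omega
  · rintro ⟨x, y, z⟩ - ⟨x', y', z'⟩ - heq
    simp only [Prod.mk.injEq, Nat.mul_right_inj hDpos.ne'] at heq ⊢
    omega

theorem dni_sub_le {x y ε t u : ℝ} {k l : ℤ} (hx : x = k + t) (hy : y = l + u) (ht : 0 ≤ t)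
    (htε : t ≤ ε) (hu : 0 ≤ u) (huε : u ≤ ε) : dni (x - y) ≤ ε := by
  refine (round_le (x - y) (k - l)).trans ?_
  rw [hx, hy, abs_le]
  push_cast
  constructor <;> linarith

theorem not_hasPPC_cantorMap (hM : ∀ j, 2 * M (j + 1) ≤ 2 ^ (j + 1)) (y : ℝ) :
    ¬ hasPPC (blockSeq M) (cantorMap y) := by
  intro hppc
  have hev := (hppc 1 zero_le_one).eventually (gt_mem_nhds (show (2 * 1 : ℝ) < 3 by norm_num))
  obtain ⟨N₀, hN₀⟩ := eventually_atTop.1 hev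
  obtain ⟨i, hi4, hiN⟩ : ∃ i, 4 ≤ i ∧ N₀ ≤ i := ⟨max 4 N₀, le_max_left _ _, le_max_right _ _⟩
  have hlt := hN₀ (2 ^ (i + 2)) (by have := Nat.lt_two_pow_self (n := i + 2); omega)
  set N := 2 ^ (i + 2) with hN
  set L := Finset.Ico (2 ^ (i + 1) + M (i + 1)) N with hL
  have hNt : N = 4 * 2 ^ i := by rw [hN]; ring
  have hLcard : 2 ^ i ≤ L.card := by
    have := hM i
    rw [hL, Nat.card_Ico, hNt]
    rw [pow_succ] at this ⊢
    omega
  have hi16 : 2 ^ 4 ≤ 2 ^ i := Nat.pow_le_pow_right (by norm_num) hi4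
  have hsub : L.offDiag ⊆ (Finset.Icc 1 N ×ˢ Finset.Icc 1 N).filter fun p =>
      p.1 ≠ p.2 ∧ dni (cantorMap y * (blockSeq M p.1 : ℝ) - cantorMap y * (blockSeq M p.2 : ℝ))
        ≤ 1 / (N : ℝ) := by
    have hval : ∀ n ∈ L, ∃ (k : ℤ) (t : ℝ), cantorMap y * (blockSeq M n : ℝ) = k + t ∧ 0 ≤ t ∧
        t ≤ 1 / (N : ℝ) := by
      intro n hn
      obtain ⟨hn1, hn2⟩ := Finset.mem_Ico.1 hn
      obtain ⟨k, t, h1, h2, h3⟩ := cantorMap_mul_pow y n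
      refine ⟨k, t, ?_, h2, h3.trans ?_⟩
      · rw [blockSeq_of_not_mem_progression hn1 hn2]
        exact_mod_cast h1
      · rw [one_div]
        gcongr
        rw [hN]
        have : i + 2 ≤ n := by
          have := Nat.lt_two_pow_self (n := i + 1)
          omega
        exact_mod_cast Nat.pow_le_pow_right (by norm_num) this
    intro p hp
    obtain ⟨hp1, hp2, hne⟩ := Finset.mem_offDiag.1 hp
    have hI : ∀ n ∈ L, n ∈ Finset.Icc 1 N := fun n hn => by
      have := Finset.mem_Ico.1 hn
      have : 0 < 2 ^ (i + 1) := by positivity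
      exact Finset.mem_Icc.2 ⟨by omega, by omega⟩
    refine Finset.mem_filter.2 ⟨Finset.mem_product.2 ⟨hI _ hp1, hI _ hp2⟩, hne, ?_⟩
    obtain ⟨k, t, h1, h2, h3⟩ := hval _ hp1
    obtain ⟨l, u, h4, h5, h6⟩ := hval _ hp2
    exact dni_sub_le h1 h4 h2 h3 h5 h6
  have hcard := Finset.card_le_card hsub
  rw [Finset.offDiag_card] at hcard
  have hbig : 3 * N ≤ L.card * L.card - L.card := by
    have : L.card * L.card - L.card = L.card * (L.card - 1) := by rw [Nat.mul_sub, mul_one]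
    rw [this]
    calc 3 * N ≤ 2 ^ i * 15 := by omega
      _ ≤ L.card * (L.card - 1) := Nat.mul_le_mul hLcard (by omega)
  have hNpos : (0 : ℝ) < N := by exact_mod_cast (show 0 < N by omega)
  unfold pcf at hlt
  rw [div_lt_iff₀ hNpos] at hlt
  exact absurd (by exact_mod_cast hbig.trans hcard) (not_le.2 hlt)

theorem one_le_dimH_NPPC_blockSeq (hM : ∀ j, 2 * M (j + 1) ≤ 2 ^ (j + 1)) :
    1 ≤ dimH (NPPC (blockSeq M)) := by
  refine one_le_dimH_image_cantorMap.trans (dimH_mono ?_)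
  rintro _ ⟨y, hy, rfl⟩
  exact ⟨cantorMap_mem_Ioo hy, not_hasPPC_cantorMap hM y⟩

end BlockSeq

/-- The length of the arithmetic progression in the `j`-th block, about
`2 ^ j / f (2 ^ j) ^ (1 / 3)` up to a constant. -/
noncomputable def progLength (f : ℝ → ℝ) (j : ℕ) : ℕ :=
  ⌈(2 : ℝ) ^ j / (2 * f (2 ^ j) ^ ((1 : ℝ) / 3))⌉₊

section ProgLength

variable {f : ℝ → ℝ}

theorem two_mul_progLength_succ_le (hf_gt : ∀ x : ℝ, 0 < x → 2 < f x) (j : ℕ) :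
    2 * progLength f (j + 1) ≤ 2 ^ (j + 1) := by
  have hf1 : 1 ≤ f (2 ^ (j + 1)) ^ ((1 : ℝ) / 3) :=
    Real.one_le_rpow (by linarith [hf_gt (2 ^ (j + 1)) (by positivity)]) (by norm_num)
  have h : progLength f (j + 1) ≤ 2 ^ j := by
    refine Nat.ceil_le.2 ?_
    rw [div_le_iff₀ (by positivity)]
    push_cast
    have hmul := mul_le_mul_of_nonneg_left hf1 (show (0 : ℝ) ≤ 2 ^ (j + 1) by positivity)
    calc (2 : ℝ) ^ (j + 1) ≤ 2 ^ (j + 1) * f (2 ^ (j + 1)) ^ ((1 : ℝ) / 3) := by linarith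
      _ = 2 ^ j * (2 * f (2 ^ (j + 1)) ^ ((1 : ℝ) / 3)) := by ring_nf
  rw [pow_succ]
  omega

theorem progLength_le (hf_gt : ∀ x : ℝ, 0 < x → 2 < f x) (j : ℕ) : progLength f j ≤ 2 ^ j := by
  have hf1 : 1 ≤ f (2 ^ j) ^ ((1 : ℝ) / 3) :=
    Real.one_le_rpow (by linarith [hf_gt (2 ^ j) (by positivity)]) (by norm_num)
  refine Nat.ceil_le.2 ?_
  push_cast
  exact div_le_self (by positivity) (by linarith)

theorem progLength_real_cube (hf_gt : ∀ x : ℝ, 0 < x → 2 < f x) (j : ℕ) :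
    ((2 : ℝ) ^ j / (2 * f (2 ^ j) ^ ((1 : ℝ) / 3))) ^ 3 = ((2 : ℝ) ^ j) ^ 3 / (8 * f (2 ^ j)) := by
  have hpos : 0 ≤ f (2 ^ j) := by linarith [hf_gt (2 ^ j) (by positivity)]
  rw [div_pow, mul_pow, ← Real.rpow_natCast (f (2 ^ j) ^ ((1 : ℝ) / 3)) 3, ← Real.rpow_mul hpos]
  norm_num

theorem le_progLength_cube (hf_gt : ∀ x : ℝ, 0 < x → 2 < f x) (j : ℕ) :
    ((2 : ℝ) ^ j) ^ 3 / (8 * f (2 ^ j)) ≤ (progLength f j : ℝ) ^ 3 := by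
  have hpos : 0 < f (2 ^ j) := by linarith [hf_gt (2 ^ j) (by positivity)]
  rw [← progLength_real_cube hf_gt]
  gcongr
  exact Nat.le_ceil _

theorem progLength_cube_le (hf_gt : ∀ x : ℝ, 0 < x → 2 < f x) (j : ℕ) :
    (progLength f j : ℝ) ^ 3 ≤ ((2 : ℝ) ^ j) ^ 3 / f (2 ^ j) + 4 := by
  have hpos : 0 < f (2 ^ j) := by linarith [hf_gt (2 ^ j) (by positivity)]
  have hcube := progLength_real_cube hf_gt j
  set x := (2 : ℝ) ^ j / (2 * f (2 ^ j) ^ ((1 : ℝ) / 3)) with hx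
  have hx0 : 0 ≤ x := by positivity
  have hceil : (progLength f j : ℝ) ≤ x + 1 := (Nat.ceil_lt_add_one hx0).le
  have hq : 0 ≤ ((2 : ℝ) ^ j) ^ 3 / f (2 ^ j) := by positivity
  have h8 : ((2 : ℝ) ^ j) ^ 3 / (8 * f (2 ^ j)) = ((2 : ℝ) ^ j) ^ 3 / f (2 ^ j) / 8 := by
    field_simp
  calc (progLength f j : ℝ) ^ 3 ≤ (x + 1) ^ 3 := by gcongr
    _ ≤ 4 * x ^ 3 + 4 := by nlinarith [mul_nonneg (add_nonneg hx0 zero_le_one) (sq_nonneg (x - 1))]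
    _ ≤ _ := by rw [hcube, h8]; linarith

theorem exists_doubling_const (hf_gt : ∀ x : ℝ, 0 < x → 2 < f x)
    (hf_mono : MonotoneOn f (Set.Ioi (0 : ℝ)))
    (hsup : ∃ x₀ : ℝ, 0 < x₀ ∧ ∃ K : ℝ, K < 2 ∧ ∀ x : ℝ, x₀ ≤ x → f (2 * x) / f x ≤ K) :
    ∃ C : ℝ, 0 < C ∧ ∀ i d : ℕ, f (2 ^ (i + d)) ≤ C * 2 ^ d * f (2 ^ i) := by
  obtain ⟨x₀, -, K, hK, h⟩ := hsup
  obtain ⟨i₀, hi₀⟩ := pow_unbounded_of_one_lt x₀ (show (1 : ℝ) < 2 by norm_num)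
  have hC := hf_gt (2 ^ i₀) (by positivity)
  refine ⟨f (2 ^ i₀), by linarith, fun i d => ?_⟩
  have hi := hf_gt (2 ^ i) (by positivity)
  induction d with
  | zero =>
    simp only [add_zero, pow_zero, mul_one]
    nlinarith
  | succ d ih =>
    by_cases hle : i₀ ≤ i + d
    · have hx : x₀ ≤ 2 ^ (i + d) :=
        hi₀.le.trans (pow_le_pow_right₀ (by norm_num) hle)
      have hpos := hf_gt (2 ^ (i + d)) (by positivity)
      have h1 := (div_le_iff₀ (by linarith)).1 (h _ hx)
      rw [← pow_succ'] at h1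
      rw [← add_assoc, pow_succ (2 : ℝ) d]
      nlinarith
    · have hmono : f (2 ^ (i + (d + 1))) ≤ f (2 ^ i₀) :=
        hf_mono (Set.mem_Ioi.2 (by positivity)) (Set.mem_Ioi.2 (by positivity))
          (pow_le_pow_right₀ (by norm_num) (by omega))
      have h2 : (1 : ℝ) ≤ 2 ^ (d + 1) := one_le_pow₀ (by norm_num)
      have h3 : 1 ≤ 2 ^ (d + 1) * f (2 ^ i) := by nlinarith
      nlinarith

theorem addEnergy_upper (hf_gt : ∀ x : ℝ, 0 < x → 2 < f x)
    (hf_mono : MonotoneOn f (Set.Ioi (0 : ℝ)))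
    (hsup : ∃ x₀ : ℝ, 0 < x₀ ∧ ∃ K : ℝ, K < 2 ∧ ∀ x : ℝ, x₀ ≤ x → f (2 * x) / f x ≤ K) :
    ∃ C : ℝ, 0 < C ∧ ∀ N : ℕ, 1 ≤ N →
      (addEnergy (trunc (blockSeq (progLength f)) N) : ℝ) ≤ C * ((N : ℝ) ^ 3 / f N) := by
  obtain ⟨C, hC, hdoub⟩ := exists_doubling_const hf_gt hf_mono hsup
  have hf1 := hf_gt 1 one_pos
  refine ⟨12 * C * f 1 + 3 * C, by positivity, fun N hN => ?_⟩
  set J := Nat.log 2 N with hJ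
  have hN1 : (1 : ℝ) ≤ N := by exact_mod_cast hN
  have hfN : 0 < f N := by linarith [hf_gt N (by linarith)]
  have hJ1 : (2 : ℝ) ^ J ≤ N := by
    exact_mod_cast Nat.pow_log_le_self 2 (show N ≠ 0 by omega)
  have hJ2 : (N : ℝ) ≤ 2 ^ (J + 1) := by
    exact_mod_cast (Nat.lt_pow_succ_log_self (by norm_num) N).le
  have hfle : ∀ j ≤ J + 1, f N ≤ C * 2 ^ (J + 1 - j) * f (2 ^ j) := fun j hj => by
    have h1 : f N ≤ f (2 ^ (J + 1)) :=
      hf_mono (Set.mem_Ioi.2 (by linarith)) (Set.mem_Ioi.2 (by positivity)) hJ2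
    have h2 := hdoub j (J + 1 - j)
    rw [Nat.add_sub_cancel' hj] at h2
    exact h1.trans h2
  have hsq : (N : ℝ) ^ 2 ≤ 2 * C * f 1 * ((N : ℝ) ^ 3 / f N) := by
    rw [← mul_div_assoc, le_div_iff₀ hfN]
    have h0 := hfle 0 (by omega)
    simp only [tsub_zero, pow_zero] at h0
    have h1 : f N ≤ 2 * C * f 1 * N := by
      refine h0.trans ?_
      rw [pow_succ]
      have : 0 < C * f 1 := by positivity
      nlinarith
    calc (N : ℝ) ^ 2 * f N ≤ (N : ℝ) ^ 2 * (2 * C * f 1 * N) := by gcongr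
      _ = _ := by ring
  have hterm : ∀ j ∈ Finset.range (J + 1),
      (progLength f j : ℝ) ^ 3 ≤ C * 2 ^ (J + 1) / f N * 4 ^ j + 4 := fun j hj => by
    have hj' : j ≤ J + 1 := by have := Finset.mem_range.1 hj; omega
    refine (progLength_cube_le hf_gt j).trans (add_le_add_left ?_ 4)
    have hfj := hf_gt (2 ^ j) (by positivity)
    rw [div_mul_eq_mul_div, div_le_div_iff₀ (by linarith) hfN]
    have h4 : (4 : ℝ) ^ j = 2 ^ j * 2 ^ j := by rw [← mul_pow]; norm_num
    calc ((2 : ℝ) ^ j) ^ 3 * f N ≤ ((2 : ℝ) ^ j) ^ 3 * (C * 2 ^ (J + 1 - j) * f (2 ^ j)) := by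
          gcongr
          exact hfle j hj'
      _ = C * (2 ^ (J + 1 - j) * 2 ^ j) * 4 ^ j * f (2 ^ j) := by rw [h4]; ring
      _ = _ := by rw [pow_sub_mul_pow _ hj']
  have hsum : (∑ j ∈ Finset.range (J + 1), (progLength f j : ℝ) ^ 3) ≤
      3 * C * ((N : ℝ) ^ 3 / f N) + 4 * (N : ℝ) ^ 2 := by
    refine (Finset.sum_le_sum hterm).trans ?_
    rw [Finset.sum_add_distrib, ← Finset.mul_sum, geom_sum_eq (by norm_num), Finset.sum_const,
      Finset.card_range, nsmul_eq_mul]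
    have hJN : ((J + 1 : ℕ) : ℝ) ≤ N := by
      have : J + 1 ≤ 2 ^ J := Nat.lt_two_pow_self
      exact le_trans (by exact_mod_cast this) hJ1
    have h4 : (4 : ℝ) ^ (J + 1) = 4 * (2 ^ J) ^ 2 := by
      rw [pow_succ, ← pow_mul, mul_comm J 2, pow_mul]; norm_num; ring
    have hcub : C * 2 ^ (J + 1) / f N * ((4 ^ (J + 1) - 1) / (4 - 1)) ≤
        3 * C * ((N : ℝ) ^ 3 / f N) := by
      rw [h4, pow_succ, div_mul_eq_mul_div, ← mul_div_assoc (3 * C)]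
      refine div_le_div_of_nonneg_right ?_ hfN.le
      have hcube : ((2 : ℝ) ^ J) ^ 3 ≤ (N : ℝ) ^ 3 := by gcongr
      have hp : 0 < (2 : ℝ) ^ J := by positivity
      have := mul_le_mul_of_nonneg_left hcube hC.le
      nlinarith [mul_pos hC hp, mul_pos hC (pow_pos hp 3)]
    nlinarith
  have hE := addEnergy_blockSeq_le (progLength_le hf_gt) N
  have hE' : (addEnergy (trunc (blockSeq (progLength f)) N) : ℝ) ≤
      2 * (N : ℝ) ^ 2 + ∑ j ∈ Finset.range (J + 1), (progLength f j : ℝ) ^ 3 := by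
    exact_mod_cast hE
  linarith

theorem addEnergy_lower (hf_gt : ∀ x : ℝ, 0 < x → 2 < f x)
    (hf_mono : MonotoneOn f (Set.Ioi (0 : ℝ))) {N : ℕ} (hN : 2 ≤ N) :
    1 / 4096 * ((N : ℝ) ^ 3 / f N) ≤ (addEnergy (trunc (blockSeq (progLength f)) N) : ℝ) := by
  obtain ⟨j, hj⟩ : ∃ j, Nat.log 2 N = j + 1 :=
    Nat.exists_eq_succ_of_ne_zero (Nat.log_pos (by norm_num) hN).ne'
  have h1 : 2 ^ (j + 1) ≤ N := hj ▸ Nat.pow_log_le_self 2 (show N ≠ 0 by omega)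
  have h2 : N < 2 ^ (j + 1 + 1) := hj ▸ Nat.lt_pow_succ_log_self (by norm_num) N
  have hle := progLength_le hf_gt j
  have hE := le_addEnergy_blockSeq (progLength_le hf_gt) (j := j) (N := N)
    (by rw [pow_succ] at h1; omega)
  have hf2j := hf_gt (2 ^ j) (by positivity)
  have hfN : f (2 ^ j) ≤ f N := by
    refine hf_mono (Set.mem_Ioi.2 (by positivity)) (Set.mem_Ioi.2 (by positivity)) ?_
    have : 2 ^ j ≤ N := (Nat.pow_le_pow_right (by norm_num) (by omega)).trans h1
    exact_mod_cast this
  have hN4 : (N : ℝ) ≤ 4 * 2 ^ j := by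
    have : N ≤ 4 * 2 ^ j := by rw [pow_succ, pow_succ] at h2; omega
    exact_mod_cast this
  have hhalf : (progLength f j : ℝ) / 2 ≤ ((progLength f j + 1) / 2 : ℕ) := by
    have : progLength f j ≤ 2 * ((progLength f j + 1) / 2) := by omega
    have : (progLength f j : ℝ) ≤ 2 * ((progLength f j + 1) / 2 : ℕ) := by exact_mod_cast this
    linarith
  calc 1 / 4096 * ((N : ℝ) ^ 3 / f N) ≤ 1 / 4096 * ((4 * 2 ^ j) ^ 3 / f (2 ^ j)) := by
        gcongr
    _ = ((2 : ℝ) ^ j) ^ 3 / (8 * f (2 ^ j)) / 8 := by field_simp; norm_num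
    _ ≤ (progLength f j : ℝ) ^ 3 / 8 := by gcongr; exact le_progLength_cube hf_gt j
    _ = ((progLength f j : ℝ) / 2) ^ 3 := by ring
    _ ≤ (((progLength f j + 1) / 2 : ℕ) : ℝ) ^ 3 := by gcongr
    _ ≤ _ := by exact_mod_cast hE

end ProgLength

theorem convergence_case_of_second_main_theorem
    (f : ℝ → ℝ)
    (hf_gt : ∀ x : ℝ, 0 < x → 2 < f x)
    (hf_mono : MonotoneOn f (Set.Ioi (0 : ℝ)))
    (hf_top : Tendsto f atTop atTop)
    (hf_O : ∃ C : ℝ, 0 < C ∧ ∀ᶠ x : ℝ in atTop,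
      f x ≤ C * x ^ ((1 : ℝ) / 3) / (Real.log x) ^ ((7 : ℝ) / 3))
    (hconv : Summable fun n : ℕ => 1 / ((n : ℝ) * f n))
    (hsup : ∃ x₀ : ℝ, 0 < x₀ ∧ ∃ K : ℝ, K < 2 ∧ ∀ x : ℝ, x₀ ≤ x → f (2 * x) / f x ≤ K) :
    ∃ a : ℕ → ℕ, (∀ n, 1 ≤ n → a n < a (n + 1)) ∧ 0 < a 1 ∧
      (∃ C₁ : ℝ, 0 < C₁ ∧ ∃ C₂ : ℝ, 0 < C₂ ∧ ∀ᶠ N : ℕ in atTop,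
        C₁ * ((N : ℝ) ^ 3 / f N) ≤ (addEnergy (trunc a N) : ℝ) ∧
        (addEnergy (trunc a N) : ℝ) ≤ C₂ * ((N : ℝ) ^ 3 / f N)) ∧
      ENNReal.ofReal
          (1 / (1 + Filter.liminf (fun x : ℝ => Real.log (f x) / Real.log x) atTop)) ≤
        dimH (NPPC a) := by
  have hM := progLength_le hf_gt
  obtain ⟨C₂, hC₂, hupper⟩ := addEnergy_upper hf_gt hf_mono hsup
  refine ⟨blockSeq (progLength f), fun n hn => blockSeq_lt_succ hM hn, blockSeq_pos _ _,
    ⟨1 / 4096, by norm_num, C₂, hC₂, ?_⟩, ?_⟩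
  · filter_upwards [eventually_ge_atTop 2] with N hN
    exact ⟨addEnergy_lower hf_gt hf_mono hN, hupper N (by omega)⟩
  · refine le_trans ?_ (one_le_dimH_NPPC_blockSeq (two_mul_progLength_succ_le hf_gt))
    rw [ENNReal.ofReal_le_one]
    have hlim : 0 ≤ Filter.liminf (fun x : ℝ => Real.log (f x) / Real.log x) atTop := by
      rw [Filter.liminf_eq]
      have hmem : (0 : ℝ) ∈ {a | ∀ᶠ x : ℝ in atTop, a ≤ Real.log (f x) / Real.log x} := by
        filter_upwards [eventually_ge_atTop 1] with x hx
        exact div_nonneg (Real.log_nonneg (by linarith [hf_gt x (by linarith)]))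
          (Real.log_nonneg hx)
      by_cases hb : BddAbove {a | ∀ᶠ x : ℝ in atTop, a ≤ Real.log (f x) / Real.log x}
      · exact le_csSup hb hmem
      · exact (Real.sSup_of_not_bddAbove hb).ge
    exact div_le_one_of_le₀ (by linarith) (by linarith)
end
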